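/- Let R = ⊕_{i∈G} R_i be an integral domain graded by an abelian group G such that 𝔾(R) is a free abelian group of rank r (r ∈ ℕ). Let S be the set of all nonzero homogeneous elements of R and consider the G-graded domain ℛ = S⁻¹R = ⊕_{i∈G} ℛ_i (with deg(a/s) = deg(a) − deg(s) for homogeneous a and s). Then ℛ_0 is a field containing R_0, and there exist nonzero homogeneous elements t_1, …, t_r of ℛ, algebraically independent over ℛ_0, such that ℛ = ℛ_0[t_1^{±1}, …, t_r^{±1}] is a Laurent polynomial ring in r variables over ℛ_0. -/

import Mathlib

noncomputable section

/-- A derivation is locally nilpotent. -/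
def IsLND {R : Type*} [CommRing R] (D : Derivation ℤ R R) : Prop :=
  ∀ b : R, ∃ n : ℕ, 0 < n ∧ (⇑D)^[n] b = 0

/-- Kernel of a derivation, as a subring. -/
def kerDer {R : Type*} [CommRing R] (D : Derivation ℤ R R) : Subring R where
  carrier := {x | D x = 0}
  one_mem' := by simp
  mul_mem' := by
    intro a b ha hb
    simp only [Set.mem_setOf_eq] at *
    rw [Derivation.leibniz, ha, hb]
    simp
  add_mem' := by
    intro a b ha hb
    simp only [Set.mem_setOf_eq] at *
    rw [map_add, ha, hb, add_zero]
  zero_mem' := by simp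
  neg_mem' := by
    intro a ha
    simp only [Set.mem_setOf_eq] at *
    rw [map_neg, ha, neg_zero]

section Graded

variable {G : Type*} [AddCommGroup G] {B : Type*} [CommRing B]

/-- The Veronese subring `B^{(H)} = ⊕_{i ∈ H} B_i` of a `G`-graded ring,
realized as the subring generated by the homogeneous elements whose degree lies in `H`. -/
def verSub (𝒜 : G → AddSubgroup B) (H : AddSubgroup G) : Subring B :=
  Subring.closure (⋃ i ∈ (H : Set G), (𝒜 i : Set B))

/-- 𝔾(B): the subgroup of G generated by the degrees of nonzero homogeneous elements. -/
def Gsub (𝒜 : G → AddSubgroup B) : AddSubgroup G :=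
  AddSubgroup.closure { i : G | 𝒜 i ≠ ⊥ }

/-- `H ∈ 𝕋(B)`: the quotient `𝔾(B)/(H ∩ 𝔾(B))` is torsion. -/
def Tmem (𝒜 : G → AddSubgroup B) (H : AddSubgroup G) : Prop :=
  ∀ g ∈ Gsub 𝒜, ∃ n : ℕ, 0 < n ∧ n • g ∈ H

/-- A homogeneous derivation of `B`. -/
def IsHomogDer (𝒜 : G → AddSubgroup B) (D : Derivation ℤ B B) : Prop :=
  ∃ d : G, ∀ (i : G) (x : B), x ∈ 𝒜 i → D x ∈ 𝒜 (i + d)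

/-- A homogeneous derivation of a graded subring `S` of `B`. -/
def IsHomogDerOn (𝒜 : G → AddSubgroup B) (S : Subring B) (D : Derivation ℤ S S) : Prop :=
  ∃ d : G, ∀ (i : G) (x : S), (x : B) ∈ 𝒜 i → ((D x : S) : B) ∈ 𝒜 (i + d)

/-- 𝕄̄(B,p): the subgroup of G generated by the degrees i with B_i ⊄ p. -/
def Mbar (𝒜 : G → AddSubgroup B) (p : Ideal B) : AddSubgroup G :=
  AddSubgroup.closure { i : G | ¬ (𝒜 i : Set B) ⊆ (p : Set B) }

/-- A prime ideal of height 1. -/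
def heightOne {R : Type*} [CommRing R] (p : Ideal R) : Prop :=
  p.IsPrime ∧ (∃ q : Ideal R, q.IsPrime ∧ q < p) ∧
    ∀ q r : Ideal R, q.IsPrime → r.IsPrime → q < r → r < p → False

open Classical in
/-- 𝔾̄(B). -/
def Gbar (𝒜 : G → AddSubgroup B) : AddSubgroup G :=
  if ∃ p : Ideal B, heightOne p then ⨅ p : {p : Ideal B // heightOne p}, Mbar 𝒜 p.1
  else Gsub 𝒜

end Graded

section Loc

variable {G : Type*} [AddCommGroup G] [DecidableEq G] {B : Type*} [CommRing B] [IsDomain B]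

/-- The multiplicative set of nonzero homogeneous elements of a graded domain. -/
def homogNZ (𝒜 : G → AddSubgroup B) [GradedRing 𝒜] : Submonoid B where
  carrier := { x | x ≠ 0 ∧ ∃ i, x ∈ 𝒜 i }
  one_mem' := ⟨one_ne_zero, 0, SetLike.one_mem_graded 𝒜⟩
  mul_mem' := by
    rintro a b ⟨ha0, i, hi⟩ ⟨hb0, j, hj⟩
    exact ⟨mul_ne_zero ha0 hb0, i + j, SetLike.mul_mem_graded hi hj⟩

variable (𝒜 : G → AddSubgroup B) [GradedRing 𝒜]

/-- A homogeneous element of the localization of B at its nonzero homogeneous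
elements: a fraction a/s with a homogeneous and s homogeneous nonzero. -/
def IsHomogLoc (y : Localization (homogNZ 𝒜)) : Prop :=
  ∃ a s : B, (∃ i, a ∈ 𝒜 i) ∧ (∃ j, s ∈ 𝒜 j) ∧ s ≠ 0 ∧
    y * algebraMap B (Localization (homogNZ 𝒜)) s
      = algebraMap B (Localization (homogNZ 𝒜)) a

/-- The degree-0 subring ℛ₀ of the localization ℛ = S⁻¹B: fractions a/s with a and s
homogeneous of the same degree, s ≠ 0. -/
def locDegZero : Subring (Localization (homogNZ 𝒜)) :=
  Subring.closure { y | ∃ (i : G) (a s : B), a ∈ 𝒜 i ∧ s ∈ 𝒜 i ∧ s ≠ 0 ∧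
    y * algebraMap B (Localization (homogNZ 𝒜)) s
      = algebraMap B (Localization (homogNZ 𝒜)) a }

/-! Every nonzero homogeneous element of `ℛ` is a unit, so the degrees occurring in `ℛ` form the
group `𝔾(R)`, and each of them is the degree of a homogeneous unit. Choose units `tᵢ` whose degrees
form a basis of `𝔾(R)`. Distinct monomials in the `tᵢ` have distinct degrees, so the `tᵢ` are
algebraically independent over `ℛ₀`; dividing a homogeneous element by the Laurent monomial of the
same degree leaves an element of `ℛ₀`, so the `tᵢ` and their inverses generate `ℛ` over `ℛ₀`. -/

theorem addSubgroup_le_of_basis_mem {Γ ι : Type*} [AddCommGroup Γ] {H K : AddSubgroup Γ}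
    (b : Module.Basis ι ℤ K) (hb : ∀ i, (b i : Γ) ∈ H) : K ≤ H := by
  rw [← AddSubgroup.addSubgroupOf_eq_top]
  refine AddSubgroup.toIntSubmodule.injective (top_le_iff.mp (b.span_eq.ge.trans ?_))
  exact Submodule.span_le.mpr (Set.range_subset_iff.mpr hb)

section GradedRing

variable {Γ A σ : Type*} [DecidableEq Γ] [CommRing A] [SetLike σ A] [AddSubgroupClass σ A]

theorem decompose_aeval_linearCombination {ι : Type*} [AddCommMonoid Γ] (𝒢 : Γ → σ) [GradedRing 𝒢]
    {d : ι → Γ} {t : ι → A} (hd : LinearIndependent ℕ d) (ht : ∀ i, t i ∈ 𝒢 (d i))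
    (p : MvPolynomial ι (SetLike.GradeZero.subring 𝒢)) (m : ι →₀ ℕ) :
    (DirectSum.decompose 𝒢 (MvPolynomial.aeval t p) (Finsupp.linearCombination ℕ d m) : A) =
      (p.coeff m).1 * m.prod fun i n => t i ^ n := by
  classical
  have term_mem (k : ι →₀ ℕ) :
      (p.coeff k).1 * k.prod (fun i n => t i ^ n) ∈ 𝒢 (Finsupp.linearCombination ℕ d k) := by
    rw [← zero_add (Finsupp.linearCombination ℕ d k)]
    exact SetLike.mul_mem_graded (p.coeff k).2
      (SetLike.prod_pow_mem_graded 𝒢 d t k fun i _ => ht i)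
  have aeval_eq : MvPolynomial.aeval t p =
      ∑ k ∈ p.support, (p.coeff k).1 * k.prod fun i n => t i ^ n :=
    MvPolynomial.eval₂_eq _ _ _
  rw [aeval_eq, DirectSum.decompose_sum, DFinsupp.finsetSum_apply, AddSubmonoidClass.coe_finsetSum,
    Finset.sum_eq_single m]
  · exact DirectSum.decompose_of_mem_same 𝒢 (term_mem m)
  · intro k _ hkm
    exact DirectSum.decompose_of_mem_ne 𝒢 (term_mem k) (hd.ne hkm)
  · intro hm
    simp [MvPolynomial.notMem_support_iff.mp hm]

theorem algebraicIndependent_of_linearIndependent_degree {ι : Type*} [AddCommMonoid Γ]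
    (𝒢 : Γ → σ) [GradedRing 𝒢] {d : ι → Γ} {t : ι → A} (hd : LinearIndependent ℕ d)
    (ht : ∀ i, t i ∈ 𝒢 (d i)) (ht' : ∀ i, t i ∈ nonZeroDivisors A) :
    AlgebraicIndependent (SetLike.GradeZero.subring 𝒢) t := by
  refine algebraicIndependent_iff.mpr fun p hp => MvPolynomial.ext _ _ fun m => ?_
  have coeff_mul : (p.coeff m).1 * m.prod (fun i n => t i ^ n) = 0 := by
    rw [← decompose_aeval_linearCombination 𝒢 hd ht, hp, DirectSum.decompose_zero]
    rfl
  exact Subtype.ext ((mul_right_mem_nonZeroDivisors_eq_zero_iff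
    (prod_mem fun i _ => pow_mem (ht' i) _)).mp coeff_mul)

variable [AddCommGroup Γ] (𝒢 : Γ → σ) [GradedRing 𝒢]

theorem mem_neg_of_mul_eq_one_of_mem {g : Γ} {x y : A} (hx : x ∈ 𝒢 g) (hxy : x * y = 1) :
    y ∈ 𝒢 (-g) := by
  have component_inv : x * DirectSum.decompose 𝒢 y (-g) = 1 := by
    rw [← DirectSum.coe_decompose_mul_add_of_left_mem 𝒢 hx, hxy, add_neg_cancel,
      DirectSum.decompose_of_mem_same 𝒢 (SetLike.one_mem_graded 𝒢)]
  rw [left_inv_eq_right_inv ((mul_comm y x).trans hxy) component_inv]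
  exact SetLike.coe_mem _

/-- The subgroup of degrees in which a given group of units contains a homogeneous element. -/
def unitDegrees (H : Subgroup Aˣ) : AddSubgroup Γ where
  carrier := {g | ∃ w ∈ H, (w : A) ∈ 𝒢 g}
  zero_mem' := ⟨1, one_mem H, SetLike.one_mem_graded 𝒢⟩
  add_mem' := by
    rintro _ _ ⟨v, hvH, hv⟩ ⟨w, hwH, hw⟩
    exact ⟨v * w, mul_mem hvH hwH, SetLike.mul_mem_graded hv hw⟩
  neg_mem' := by
    rintro _ ⟨w, hwH, hw⟩
    exact ⟨w⁻¹, inv_mem hwH, mem_neg_of_mul_eq_one_of_mem 𝒢 hw w.mul_inv⟩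

/-- A graded ring is a graded field when its nonzero homogeneous elements are units. The zero ring
is not excluded. -/
def IsGradedField : Prop :=
  ∀ x, SetLike.IsHomogeneousElem 𝒢 x → x ≠ 0 → IsUnit x

end GradedRing

section GradedField

variable {Γ A : Type*} [AddCommGroup Γ] [CommRing A] {𝒢 : Γ → AddSubgroup A}

theorem mem_Gsub_of_mem {g : Γ} {x : A} (hx : x ∈ 𝒢 g) (hx0 : x ≠ 0) : g ∈ Gsub 𝒢 :=
  AddSubgroup.subset_closure fun h => hx0 ((AddSubgroup.eq_bot_iff_forall _).mp h x hx)

variable [DecidableEq Γ] [GradedRing 𝒢]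

theorem eq_top_of_Gsub_le_unitDegrees {C : Subring A}
    (hC : SetLike.GradeZero.subring 𝒢 ≤ C) (hdeg : Gsub 𝒢 ≤ unitDegrees 𝒢 C.toSubmonoid.units) :
    C = ⊤ := by
  classical
  have homogeneous_mem {g : Γ} {y : A} (hy : y ∈ 𝒢 g) : y ∈ C := by
    by_cases hy0 : y = 0
    · exact hy0 ▸ zero_mem C
    obtain ⟨w, ⟨hwC, -⟩, hw⟩ := hdeg (mem_Gsub_of_mem hy hy0)
    have degree_zero : y * ↑w⁻¹ ∈ 𝒢 0 := by
      rw [← add_neg_cancel g]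
      exact SetLike.mul_mem_graded hy (mem_neg_of_mul_eq_one_of_mem 𝒢 hw w.mul_inv)
    rw [← w.inv_mul_cancel_right y]
    exact mul_mem (hC degree_zero) hwC
  refine eq_top_iff.mpr fun y _ => ?_
  rw [← DirectSum.sum_support_decompose 𝒢 y]
  exact sum_mem fun g _ => homogeneous_mem (SetLike.coe_mem _)

namespace IsGradedField

theorem exists_mul_eq_one_of_mem_zero (h𝒢 : IsGradedField 𝒢) {y : A} (hy : y ∈ 𝒢 0) (hy0 : y ≠ 0) :
    ∃ z ∈ 𝒢 0, y * z = 1 := by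
  obtain ⟨z, hz⟩ := (h𝒢 y ⟨0, hy⟩ hy0).exists_right_inv
  exact ⟨z, by simpa using mem_neg_of_mul_eq_one_of_mem 𝒢 hy hz, hz⟩

theorem Gsub_le_unitDegrees_top (h𝒢 : IsGradedField 𝒢) : Gsub 𝒢 ≤ unitDegrees 𝒢 ⊤ := by
  refine (AddSubgroup.closure_le _).mpr fun g hg => ?_
  obtain ⟨x, hx, hx0⟩ := (𝒢 g).bot_or_exists_ne_zero.resolve_left hg
  obtain ⟨w, rfl⟩ := h𝒢 x ⟨g, hx⟩ hx0
  exact ⟨w, Subgroup.mem_top w, hx⟩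

theorem exists_laurent_variables (h𝒢 : IsGradedField 𝒢) {ι : Type*}
    (b : Module.Basis ι ℤ (Gsub 𝒢)) :
    ∃ t : ι → Aˣ, (∀ i, (t i : A) ∈ 𝒢 (b i)) ∧
      AlgebraicIndependent (SetLike.GradeZero.subring 𝒢) (fun i => (t i : A)) ∧
      Subring.closure ((SetLike.GradeZero.subring 𝒢 : Set A) ∪ Set.range (fun i => (t i : A)) ∪
        Set.range (fun i => (↑(t i)⁻¹ : A))) = ⊤ := by
  choose t _ ht using fun i => h𝒢.Gsub_le_unitDegrees_top (b i).2
  refine ⟨t, ht, ?_, ?_⟩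
  · have degrees_indep : LinearIndependent ℤ fun i => (b i : Γ) :=
      b.linearIndependent.map' (Gsub 𝒢).toIntSubmodule.subtype (Submodule.ker_subtype _)
    exact algebraicIndependent_of_linearIndependent_degree 𝒢 (degrees_indep.restrict_scalars' ℕ) ht
      fun i => (t i).isUnit.mem_nonZeroDivisors
  · refine eq_top_of_Gsub_le_unitDegrees (𝒢 := 𝒢)
      (fun y hy => Subring.subset_closure (.inl (.inl hy)))
      (addSubgroup_le_of_basis_mem b fun i => ⟨t i, ⟨?_, ?_⟩, ht i⟩)
    · exact Subring.subset_closure (.inl (.inr ⟨i, rfl⟩))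
    · exact Subring.subset_closure (.inr ⟨i, rfl⟩)

end IsGradedField

end GradedField

section Fractions

variable {Γ A : Type*} [AddCommGroup Γ] [CommRing A] (𝒢 : Γ → AddSubgroup A)
  [SetLike.GradedMonoid 𝒢] (M : Submonoid A) (L : Type*) [CommRing L] [Algebra A L]

/-- The fractions `a / s` of degree `g` in a localization `L` of a graded ring at `M`, where `a` is
homogeneous and `s ∈ M` is homogeneous: the degree-`g` part of the induced grading of `L`. -/
def fractionsOfDegree (g : Γ) : AddSubgroup L where
  carrier := {y | ∃ (j : Γ) (a s : A), a ∈ 𝒢 (g + j) ∧ s ∈ 𝒢 j ∧ s ∈ M ∧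
    y * algebraMap A L s = algebraMap A L a}
  zero_mem' := ⟨0, 0, 1, zero_mem _, SetLike.one_mem_graded 𝒢, one_mem M, by simp⟩
  add_mem' := by
    rintro y z ⟨j, a, s, ha, hs, hsM, hy⟩ ⟨k, b, t, hb, ht, htM, hz⟩
    refine ⟨j + k, a * t + b * s, s * t, add_mem ?_ ?_, SetLike.mul_mem_graded hs ht,
      mul_mem hsM htM, ?_⟩
    · rw [← add_assoc]
      exact SetLike.mul_mem_graded ha ht
    · rw [add_comm j, ← add_assoc]
      exact SetLike.mul_mem_graded hb hs
    · simp only [map_add, map_mul, ← hy, ← hz]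
      ring
  neg_mem' := by
    rintro y ⟨j, a, s, ha, hs, hsM, hy⟩
    exact ⟨j, -a, s, neg_mem ha, hs, hsM, by rw [neg_mul, hy, map_neg]⟩

namespace fractionsOfDegree

theorem algebraMap_mem {g : Γ} {a : A} (ha : a ∈ 𝒢 g) :
    algebraMap A L a ∈ fractionsOfDegree 𝒢 M L g :=
  ⟨0, a, 1, by rwa [add_zero], SetLike.one_mem_graded 𝒢, one_mem M, by simp⟩

instance gradedMonoid : SetLike.GradedMonoid (fractionsOfDegree 𝒢 M L) where
  one_mem := by simpa using algebraMap_mem 𝒢 M L (SetLike.one_mem_graded 𝒢)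
  mul_mem := by
    rintro g h y z ⟨j, a, s, ha, hs, hsM, hy⟩ ⟨k, b, t, hb, ht, htM, hz⟩
    refine ⟨j + k, a * b, s * t, ?_, SetLike.mul_mem_graded hs ht, mul_mem hsM htM, ?_⟩
    · rw [add_add_add_comm]
      exact SetLike.mul_mem_graded ha hb
    · rw [map_mul, map_mul, ← hy, ← hz, mul_mul_mul_comm]

variable {M L}

theorem isGradedField [IsLocalization M L]
    (hM : ∀ a, SetLike.IsHomogeneousElem 𝒢 a → a ≠ 0 → a ∈ M) :
    IsGradedField (fractionsOfDegree 𝒢 M L) := by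
  rintro y ⟨g, j, a, s, ha, -, hsM, hys⟩ hy0
  have ha0 : a ≠ 0 := by
    rintro rfl
    exact hy0 ((IsLocalization.map_units L ⟨s, hsM⟩).mul_left_eq_zero.mp (hys.trans (map_zero _)))
  exact isUnit_of_mul_isUnit_left (hys ▸ IsLocalization.map_units L ⟨a, hM a ⟨_, ha⟩ ha0⟩)

theorem Gsub_eq [IsLocalization M L] (hM : M ≤ nonZeroDivisors A) :
    Gsub (fractionsOfDegree 𝒢 M L) = Gsub 𝒢 := by
  refine le_antisymm ((AddSubgroup.closure_le _).mpr fun g hg => ?_)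
    (AddSubgroup.closure_mono fun g hg => ?_)
  · obtain ⟨y, ⟨j, a, s, ha, hs, hsM, hys⟩, hy0⟩ :=
      (fractionsOfDegree 𝒢 M L g).bot_or_exists_ne_zero.resolve_left hg
    have hys0 : y * algebraMap A L s ≠ 0 :=
      mt (IsLocalization.map_units L ⟨s, hsM⟩).mul_left_eq_zero.mp hy0
    have ha0 : a ≠ 0 := fun h => hys0 (by rw [hys, h, map_zero])
    have hs0 : s ≠ 0 := fun h => hys0 (by rw [h, map_zero, mul_zero])
    simpa using sub_mem (mem_Gsub_of_mem ha ha0) (mem_Gsub_of_mem hs hs0)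
  · obtain ⟨a, ha, ha0⟩ := (𝒢 g).bot_or_exists_ne_zero.resolve_left hg
    exact AddSubgroup.ne_bot_iff_exists_ne_zero.mpr ⟨⟨_, algebraMap_mem 𝒢 M L ha⟩, fun h =>
      ha0 (IsLocalization.injective L hM ((Subtype.ext_iff.mp h).trans (map_zero _).symm))⟩

end fractionsOfDegree

end Fractions

section Decomposition

variable {Γ A : Type*} [AddCommGroup Γ] [DecidableEq Γ] [CommRing A] (𝒢 : Γ → AddSubgroup A)
  [GradedRing 𝒢] (M : Submonoid A) (L : Type*) [CommRing L] [Algebra A L]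

namespace fractionsOfDegree

/-- The map `a ↦ (aᵢ / 1)ᵢ` from a graded ring to the direct sum of the homogeneous parts of its
localization. It inverts `M`, so it extends to the localization and decomposes fractions into
homogeneous ones. -/
def toDirectSum : A →+* DirectSum Γ fun g => fractionsOfDegree 𝒢 M L g :=
  (DirectSum.toSemiring
    (fun g => (DirectSum.of (fun g => fractionsOfDegree 𝒢 M L g) g).comp
      (((algebraMap A L : A →+ L).comp (𝒢 g).subtype).codRestrict (fractionsOfDegree 𝒢 M L g)
        fun a => algebraMap_mem 𝒢 M L a.2))
    (congrArg (DirectSum.of _ 0) (Subtype.ext (map_one (algebraMap A L))))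
    fun a b => by
      simp only [AddMonoidHom.comp_apply, DirectSum.of_mul_of]
      exact congrArg (DirectSum.of _ _) (Subtype.ext (map_mul (algebraMap A L) (a : A) b))).comp
    (DirectSum.decomposeRingEquiv 𝒢 : A →+* DirectSum Γ fun g => 𝒢 g)

variable {M L}

theorem toDirectSum_of_mem {g : Γ} {a : A} (ha : a ∈ 𝒢 g) :
    toDirectSum 𝒢 M L a = DirectSum.of _ g ⟨algebraMap A L a, algebraMap_mem 𝒢 M L ha⟩ := by
  lift a to 𝒢 g using ha
  exact (congrArg _ (DirectSum.decompose_coe 𝒢 a)).trans (DirectSum.toAddMonoid_of _ _ _)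

theorem coeRingHom_toDirectSum (a : A) :
    DirectSum.coeRingHom (fractionsOfDegree 𝒢 M L) (toDirectSum 𝒢 M L a) = algebraMap A L a := by
  induction a using DirectSum.Decomposition.inductionOn 𝒢 with
  | zero => simp only [map_zero]
  | homogeneous a => rw [toDirectSum_of_mem 𝒢 a.2, DirectSum.coeRingHom_of]
  | add a b ha hb => simp only [map_add, ha, hb]

variable [IsLocalization M L]

theorem isUnit_toDirectSum {j : Γ} {s : A} (hs : s ∈ 𝒢 j) (hsM : s ∈ M) :
    IsUnit (toDirectSum 𝒢 M L s) := by
  have inv_mem : IsLocalization.mk' L 1 ⟨s, hsM⟩ ∈ fractionsOfDegree 𝒢 M L (-j) :=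
    ⟨j, 1, s, by rw [neg_add_cancel]; exact SetLike.one_mem_graded 𝒢, hs, hsM,
      IsLocalization.mk'_spec L 1 ⟨s, hsM⟩⟩
  refine .of_mul_eq_one (DirectSum.of _ (-j) ⟨_, inv_mem⟩) ?_
  rw [toDirectSum_of_mem 𝒢 hs, DirectSum.of_mul_of]
  refine DirectSum.of_eq_of_gradedMonoid_eq (Sigma.subtype_ext (add_neg_cancel j) ?_)
  exact (IsLocalization.mk'_spec' L 1 ⟨s, hsM⟩).trans (map_one _)

variable (hM : ∀ s ∈ M, SetLike.IsHomogeneousElem 𝒢 s)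

/-- The extension of `toDirectSum` to the localization, splitting `a / s` into the homogeneous
fractions `aᵢ / s`. -/
def decomposition : L →+* DirectSum Γ fun g => fractionsOfDegree 𝒢 M L g :=
  IsLocalization.lift (M := M) (g := toDirectSum 𝒢 M L) fun s =>
    isUnit_toDirectSum 𝒢 (hM s s.2).choose_spec s.2

theorem decomposition_of_mem {g : Γ} {y : L} (hy : y ∈ fractionsOfDegree 𝒢 M L g) :
    decomposition 𝒢 hM y = DirectSum.of _ g ⟨y, hy⟩ := by
  obtain ⟨j, a, s, ha, hs, hsM, hys⟩ := id hy
  refine (isUnit_toDirectSum (L := L) 𝒢 hs hsM).mul_right_cancel ?_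
  calc decomposition 𝒢 hM y * toDirectSum 𝒢 M L s
      = decomposition 𝒢 hM (y * algebraMap A L s) := by
        rw [map_mul, decomposition, IsLocalization.lift_eq]
    _ = toDirectSum 𝒢 M L a := by rw [hys, decomposition, IsLocalization.lift_eq]
    _ = DirectSum.of _ g ⟨y, hy⟩ * toDirectSum 𝒢 M L s := by
        rw [toDirectSum_of_mem 𝒢 ha, toDirectSum_of_mem 𝒢 hs, DirectSum.of_mul_of]
        exact congrArg (DirectSum.of _ (g + j)) (Subtype.ext hys.symm)

theorem coeRingHom_decomposition (y : L) :
    DirectSum.coeRingHom (fractionsOfDegree 𝒢 M L) (decomposition 𝒢 hM y) = y := by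
  have comp_eq_id : (DirectSum.coeRingHom (fractionsOfDegree 𝒢 M L)).comp (decomposition 𝒢 hM) =
      RingHom.id L :=
    IsLocalization.ringHom_ext M <| RingHom.ext fun a => by
      simp only [RingHom.comp_apply, decomposition, IsLocalization.lift_eq,
        coeRingHom_toDirectSum, RingHom.id_apply]
  exact RingHom.congr_fun comp_eq_id y

/-- The grading of a localization at homogeneous elements by `deg (a / s) = deg a - deg s`. -/
abbrev gradedRing : GradedRing (fractionsOfDegree 𝒢 M L) where
  __ := DirectSum.Decomposition.ofAddHom (fractionsOfDegree 𝒢 M L)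
    (decomposition 𝒢 hM).toAddMonoidHom
    (AddMonoidHom.ext (coeRingHom_decomposition 𝒢 hM))
    (DirectSum.addHom_ext fun g y => by
      rw [AddMonoidHom.comp_apply, DirectSum.coeAddMonoidHom_of]
      exact decomposition_of_mem 𝒢 hM y.2)

end fractionsOfDegree

end Decomposition

/-- The grading of `ℛ = S⁻¹B` by `deg (a / s) = deg a - deg s`. -/
abbrev homogeneousFractions : G → AddSubgroup (Localization (homogNZ 𝒜)) :=
  fractionsOfDegree 𝒜 (homogNZ 𝒜) (Localization (homogNZ 𝒜))

instance : GradedRing (homogeneousFractions 𝒜) :=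
  fractionsOfDegree.gradedRing 𝒜 fun _ hs => hs.2

theorem isGradedField_homogeneousFractions : IsGradedField (homogeneousFractions 𝒜) :=
  fractionsOfDegree.isGradedField 𝒜 fun _ ha ha0 => ⟨ha0, ha⟩

theorem locDegZero_eq_subring :
    locDegZero 𝒜 = SetLike.GradeZero.subring (homogeneousFractions 𝒜) := by
  refine le_antisymm (Subring.closure_le.mpr ?_) ?_
  · rintro y ⟨i, a, s, ha, hs, hs0, hys⟩
    exact ⟨i, a, s, by rwa [zero_add], hs, ⟨hs0, i, hs⟩, hys⟩
  · rintro y ⟨i, a, s, ha, hs, ⟨hs0, -⟩, hys⟩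
    exact Subring.subset_closure ⟨i, a, s, by rwa [zero_add] at ha, hs, hs0, hys⟩

theorem isHomogLoc_of_mem {g : G} {y : Localization (homogNZ 𝒜)}
    (hy : y ∈ homogeneousFractions 𝒜 g) : IsHomogLoc 𝒜 y := by
  obtain ⟨j, a, s, ha, hs, ⟨hs0, -⟩, hys⟩ := hy
  exact ⟨a, s, ⟨_, ha⟩, ⟨_, hs⟩, hs0, hys⟩

theorem localization_at_homogeneous_is_laurent_general
    {ι : Type*} (b : Module.Basis ι ℤ (Gsub 𝒜)) :
    ((∀ y ∈ locDegZero 𝒜, y ≠ 0 → ∃ z ∈ locDegZero 𝒜, y * z = 1) ∧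
      (algebraMap B (Localization (homogNZ 𝒜))) '' (𝒜 0) ⊆ locDegZero 𝒜) ∧
    ∃ t : ι → Localization (homogNZ 𝒜),
      (∀ j, t j ≠ 0 ∧ IsHomogLoc 𝒜 (t j)) ∧
      (∀ p : MvPolynomial ι (locDegZero 𝒜),
        MvPolynomial.eval₂ (locDegZero 𝒜).subtype t p = 0 → p = 0) ∧
      ∃ u : ι → Localization (homogNZ 𝒜), (∀ j, t j * u j = 1) ∧
        Subring.closure
          ((locDegZero 𝒜 : Set (Localization (homogNZ 𝒜)))
            ∪ Set.range t ∪ Set.range u) = ⊤ := by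
  have homogNZ_le : homogNZ 𝒜 ≤ nonZeroDivisors B :=
    fun _ hs => mem_nonZeroDivisors_of_ne_zero hs.1
  have : Nontrivial (Localization (homogNZ 𝒜)) :=
    (IsLocalization.injective _ homogNZ_le).nontrivial
  have hfield := isGradedField_homogeneousFractions 𝒜
  have degrees_eq : Gsub 𝒜 = Gsub (homogeneousFractions 𝒜) :=
    (fractionsOfDegree.Gsub_eq 𝒜 homogNZ_le).symm
  obtain ⟨t, ht, ht_indep, ht_top⟩ := hfield.exists_laurent_variables
    (b.map (AddEquiv.addSubgroupCongr degrees_eq).toIntLinearEquiv)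
  rw [locDegZero_eq_subring]
  refine ⟨⟨fun y => hfield.exists_mul_eq_one_of_mem_zero, ?_⟩, fun i => t i,
    fun i => ⟨(t i).ne_zero, isHomogLoc_of_mem 𝒜 (ht i)⟩, algebraicIndependent_iff.mp ht_indep,
    fun i => ↑(t i)⁻¹, fun i => (t i).mul_inv, ht_top⟩
  rintro _ ⟨a, ha, rfl⟩
  exact fractionsOfDegree.algebraMap_mem 𝒜 _ _ ha

/-- Let R be a domain graded by an abelian group G with 𝔾(R) free abelian of rank r,
let S be the set of nonzero homogeneous elements of R, and ℛ = S⁻¹R.  Then ℛ₀ is a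
field containing R₀, and ℛ = ℛ₀[t₁^{±1}, …, t_r^{±1}] is a Laurent polynomial ring over
ℛ₀ on nonzero homogeneous elements t₁, …, t_r that are algebraically independent
over ℛ₀. -/
theorem localization_at_homogeneous_is_laurent
    (r : ℕ) (hfree : Nonempty ((Gsub 𝒜) ≃+ (Fin r → ℤ))) :
    ((∀ y ∈ locDegZero 𝒜, y ≠ 0 → ∃ z ∈ locDegZero 𝒜, y * z = 1) ∧
      (algebraMap B (Localization (homogNZ 𝒜))) '' (𝒜 0) ⊆ locDegZero 𝒜) ∧
    ∃ t : Fin r → Localization (homogNZ 𝒜),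
      (∀ j, t j ≠ 0 ∧ IsHomogLoc 𝒜 (t j)) ∧
      (∀ p : MvPolynomial (Fin r) (locDegZero 𝒜),
        MvPolynomial.eval₂ (locDegZero 𝒜).subtype t p = 0 → p = 0) ∧
      ∃ u : Fin r → Localization (homogNZ 𝒜), (∀ j, t j * u j = 1) ∧
        Subring.closure
          ((locDegZero 𝒜 : Set (Localization (homogNZ 𝒜)))
            ∪ Set.range t ∪ Set.range u) = ⊤ := by
  obtain ⟨e⟩ := hfree
  exact localization_at_homogeneous_is_laurent_general 𝒜
    (Module.Basis.ofEquivFun e.toIntLinearEquiv)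

end Loc
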